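/- There exist a constant C > 0 and an integer l_0, both independent of m, such that for all integers l ≥ l_0, all indices h ≠ i, and all admissible P^i, P^h, Λ_i, Λ_h: | ∫_{ℝ^n} ( K(x/λ) − 1 ) U_{P^h,Λ_h}(x)^{(n+2s)/(n−2s)} (∂U_{P^i,Λ_i}/∂Λ_i)(x) dx | ≤ C λ^{−2s} |X^i − X^h|^{−(n−2s)}. -/

import Mathlib

/-- `X` enumerates the lattice points `{d·q : q ∈ ([0,m+1)^k × {0}) ∩ ℤ^n}` (with spacing `d = λl`). -/
def latticeEnum (n k m : ℕ) (d : ℝ)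
    (X : Fin ((m + 1) ^ k) → EuclideanSpace ℝ (Fin n)) : Prop :=
  Function.Injective X ∧
  (∀ i, ∃ q : Fin n → ℤ,
      (∀ j : Fin n, (j : ℕ) < k → 0 ≤ q j ∧ q j ≤ (m : ℤ)) ∧
      (∀ j : Fin n, k ≤ (j : ℕ) → q j = 0) ∧
      (∀ j : Fin n, X i j = d * (q j : ℝ))) ∧
  (∀ q : Fin n → ℤ,
      (∀ j : Fin n, (j : ℕ) < k → 0 ≤ q j ∧ q j ≤ (m : ℤ)) →
      (∀ j : Fin n, k ≤ (j : ℕ) → q j = 0) →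
      ∃ i, ∀ j : Fin n, X i j = d * (q j : ℝ))

/-- Conditions (H₁)–(H₃) on `K`, with `K(0) = 1`: positivity and boundedness, `C^{1,1}`
regularity, `1`-periodicity in the first `k` variables, and the expansion
`K(x) = 1 + Σ aᵢ|xᵢ|^β + R(x)` near the critical point `0`. -/
def KHyp (n k : ℕ) (β : ℝ) (a : Fin n → ℝ)
    (K : EuclideanSpace ℝ (Fin n) → ℝ) : Prop :=
  (∃ K₀ K₁ : ℝ, 0 < K₀ ∧ ∀ x, K₀ ≤ K x ∧ K x ≤ K₁) ∧
  ContDiff ℝ 1 K ∧ (∃ L : NNReal, LipschitzWith L (fderiv ℝ K)) ∧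
  (∀ x : EuclideanSpace ℝ (Fin n), ∀ j : Fin n, (j : ℕ) < k →
      K (x + EuclideanSpace.single j (1 : ℝ)) = K x) ∧
  K 0 = 1 ∧ fderiv ℝ K 0 = 0 ∧
  (∀ i, a i ≠ 0) ∧ (∑ i, a i) < 0 ∧
  ∃ R : EuclideanSpace ℝ (Fin n) → ℝ,
    (∀ᶠ x in nhds 0, K x = 1 + (∑ i, a i * |x i| ^ β) + R x) ∧
    ContDiff ℝ (⌊β⌋₊ - 1 : ℕ) R ∧
    (∃ L : NNReal, LipschitzWith L (iteratedFDeriv ℝ (⌊β⌋₊ - 1) R)) ∧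
    Filter.Tendsto
      (fun y : EuclideanSpace ℝ (Fin n) =>
        ∑ j ∈ Finset.range (⌊β⌋₊ + 1), ‖iteratedFDeriv ℝ j R y‖ * ‖y‖ ^ (-β + (j : ℝ)))
      (nhdsWithin 0 {0}ᶜ) (nhds 0)

/-!
Near its centre a bubble is bounded, and away from it the bubble and its derivative in `Λ` decay
like `|x - X|^{-(n-2s)}`, so both factors are dominated by powers of the distances `ρ = |x - X^h|`
and `σ = |x - X^i|` to lattice points. Periodicity together with the vanishing of `K - 1` to order
`β` at `0` gives `|K(x/λ) - 1| ≤ A (1 ∧ (ρ/λ)^β)`, which makes the singularity `ρ^{-(n+2s)}`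
integrable because `β > 2s`. Let `D = |X^i - X^h| ≥ λ`. Where `ρ ≤ D/2` one has `σ ≥ D/2`, and
rescaling by `λ` around `X^h` yields `λ^{-2s} D^{-(n-2s)}`. Where `ρ > D/2` one has
`3ρ ≥ D ∨ σ`, and rescaling by `D` around `X^i` yields `D^{-n} ≤ λ^{-2s} D^{-(n-2s)}`.
-/

open Asymptotics Filter MeasureTheory Module Set Topology

section Profile

/-- The radial profile `r^(-p) (1 ∨ r)^(-q)`, which is `r^(-p)` on the unit ball and `r^(-(p+q))`
outside of it. -/
noncomputable def powerProfile (p q r : ℝ) : ℝ := r ^ (-p) * max 1 r ^ (-q)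

theorem powerProfile_nonneg (p q : ℝ) {r : ℝ} (hr : 0 ≤ r) : 0 ≤ powerProfile p q r := by
  unfold powerProfile
  positivity

theorem powerProfile_of_le_one (p q : ℝ) {r : ℝ} (hr : r ≤ 1) :
    powerProfile p q r = r ^ (-p) := by
  simp [powerProfile, max_eq_left hr]

theorem powerProfile_of_one_le (p q : ℝ) {r : ℝ} (hr : 1 ≤ r) :
    powerProfile p q r = r ^ (-(p + q)) := by
  rw [powerProfile, max_eq_right hr, ← Real.rpow_add (by linarith), neg_add]

theorem min_one_rpow_mul_rpow_neg_le_powerProfile (a β : ℝ) {z : ℝ} (hz : 0 ≤ z) :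
    min 1 (z ^ β) * z ^ (-a) ≤ powerProfile (a - β) β z := by
  rcases le_total z 1 with h | h
  · calc min 1 (z ^ β) * z ^ (-a) ≤ z ^ β * z ^ (-a) := by gcongr; exact min_le_right _ _
      _ ≤ z ^ (β + -a) := Real.le_rpow_add hz _ _
      _ = powerProfile (a - β) β z := by rw [powerProfile_of_le_one _ _ h]; ring_nf
  · calc min 1 (z ^ β) * z ^ (-a) ≤ 1 * z ^ (-a) := by gcongr; exact min_le_left _ _
      _ = powerProfile (a - β) β z := by rw [powerProfile_of_one_le _ _ h]; ring_nf

variable {E : Type*} [NormedAddCommGroup E] [NormedSpace ℝ E] [FiniteDimensional ℝ E]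
  [MeasurableSpace E] [BorelSpace E] (μ : Measure E) [μ.IsAddHaarMeasure]

theorem integrable_powerProfile_norm [Nontrivial E] {p q : ℝ} (hp : p < finrank ℝ E)
    (hpq : finrank ℝ E < p + q) : Integrable (fun x : E => powerProfile p q ‖x‖) μ := by
  have radial_density {y : ℝ} (hy : 0 < y) (c : ℝ) :
      y ^ (finrank ℝ E - 1) * y ^ (-c) = y ^ (finrank ℝ E - 1 - c) := by
    rw [← Real.rpow_natCast, Nat.cast_pred finrank_pos, ← Real.rpow_add hy, sub_eq_add_neg _ c]
  rw [integrable_fun_norm_addHaar μ (f := powerProfile p q),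
    ← Ioc_union_Ioi_eq_Ioi (zero_le_one' ℝ)]
  refine IntegrableOn.union ?_ ?_
  · have near_zero : IntegrableOn (fun y : ℝ => y ^ (finrank ℝ E - 1 - p)) (Ioc 0 1) :=
      (intervalIntegrable_iff_integrableOn_Ioc_of_le zero_le_one).mp
        (intervalIntegral.intervalIntegrable_rpow' (by linarith))
    refine near_zero.congr_fun (fun y hy => ?_) measurableSet_Ioc
    rw [powerProfile_of_le_one p q hy.2, smul_eq_mul, radial_density hy.1]
  · have near_infinity : IntegrableOn (fun y : ℝ => y ^ (finrank ℝ E - 1 - (p + q))) (Ioi 1) :=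
      integrableOn_Ioi_rpow_of_lt (by linarith) one_pos
    refine near_infinity.congr_fun (fun y (hy : 1 < y) => ?_) measurableSet_Ioi
    rw [powerProfile_of_one_le p q hy.le, smul_eq_mul, radial_density (one_pos.trans hy)]

variable {μ} in
theorem integrable_comp_norm_sub_div {g : ℝ → ℝ} (hg : Integrable (fun x => g ‖x‖) μ) {r : ℝ}
    (hr : 0 < r) (Y : E) : Integrable (fun x => g (‖x - Y‖ / r)) μ := by
  have := (hg.comp_smul (inv_ne_zero hr.ne')).comp_sub_right Y
  simpa only [norm_smul, norm_inv, Real.norm_of_nonneg hr.le, inv_mul_eq_div] using this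

theorem integral_comp_norm_sub_div (g : ℝ → ℝ) {r : ℝ} (hr : 0 < r) (Y : E) :
    ∫ x, g (‖x - Y‖ / r) ∂μ = r ^ finrank ℝ E * ∫ x, g ‖x‖ ∂μ := by
  have := Measure.integral_comp_inv_smul_of_nonneg μ (fun x => g ‖x‖) hr.le
  simpa only [norm_smul, norm_inv, Real.norm_of_nonneg hr.le, inv_mul_eq_div,
    integral_sub_right_eq_self (fun x => g (‖x‖ / r)) Y, smul_eq_mul] using this

end Profile

section InteractionWeight

theorem rpow_neg_le_mul_rpow_neg {b c x y : ℝ} (hb : 0 ≤ b) (hc : 0 < c) (hx : 0 < x)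
    (hxy : x ≤ c * y) : y ^ (-b) ≤ c ^ b * x ^ (-b) := by
  have hy : 0 < y := pos_of_mul_pos_right (hx.trans_le hxy) hc.le
  calc y ^ (-b) = c ^ b * (c * y) ^ (-b) := by
        rw [Real.mul_rpow hc.le hy.le, ← mul_assoc, ← Real.rpow_add hc, add_neg_cancel,
          Real.rpow_zero, one_mul]
    _ ≤ c ^ b * x ^ (-b) := by
        grw [Real.rpow_le_rpow_of_nonpos hx hxy (neg_nonpos.mpr hb)]

theorem min_one_rpow_mul_rpow_mul_rpow_le {a b β r D ρ σ : ℝ} (ha : 0 ≤ a) (hb : 0 ≤ b)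
    (hr : 0 < r) (hD : 0 < D) (hρ : 0 ≤ ρ) (hσ : 0 ≤ σ) (hDρσ : D ≤ ρ + σ) (hσρD : σ ≤ ρ + D) :
    min 1 ((ρ / r) ^ β) * ρ ^ (-a) * σ ^ (-b) ≤
      2 ^ b * (r ^ (-a) * D ^ (-b)) * powerProfile (a - β) β (ρ / r) +
        3 ^ a * D ^ (-(a + b)) * powerProfile b a (σ / D) := by
  have hprofile₁ := powerProfile_nonneg (a - β) β (div_nonneg hρ hr.le)
  have hprofile₂ := powerProfile_nonneg b a (div_nonneg hσ hD.le)
  rcases le_or_gt ρ (D / 2) with near | far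
  · have hσD : σ ^ (-b) ≤ 2 ^ b * D ^ (-b) :=
      rpow_neg_le_mul_rpow_neg hb two_pos hD (by linarith)
    have hρr : ρ ^ (-a) = r ^ (-a) * (ρ / r) ^ (-a) := by
      rw [← Real.mul_rpow hr.le (by positivity), mul_div_cancel₀ _ hr.ne']
    calc min 1 ((ρ / r) ^ β) * ρ ^ (-a) * σ ^ (-b)
        = r ^ (-a) * (min 1 ((ρ / r) ^ β) * (ρ / r) ^ (-a)) * σ ^ (-b) := by rw [hρr]; ring
      _ ≤ r ^ (-a) * powerProfile (a - β) β (ρ / r) * (2 ^ b * D ^ (-b)) := by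
          gcongr
          exact min_one_rpow_mul_rpow_neg_le_powerProfile a β (by positivity)
      _ = 2 ^ b * (r ^ (-a) * D ^ (-b)) * powerProfile (a - β) β (ρ / r) := by ring
      _ ≤ _ := le_add_of_nonneg_right (by positivity)
  · have hρmax : ρ ^ (-a) ≤ 3 ^ a * (D * max 1 (σ / D)) ^ (-a) := by
      refine rpow_neg_le_mul_rpow_neg ha three_pos (by positivity) ?_
      rw [mul_max_of_nonneg _ _ hD.le, mul_one, mul_div_cancel₀ _ hD.ne']
      exact max_le (by linarith) (by linarith)
    calc min 1 ((ρ / r) ^ β) * ρ ^ (-a) * σ ^ (-b)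
        ≤ 1 * (3 ^ a * (D * max 1 (σ / D)) ^ (-a)) * (D * (σ / D)) ^ (-b) := by
          rw [mul_div_cancel₀ _ hD.ne']
          gcongr
          exact min_le_left _ _
      _ = 3 ^ a * D ^ (-(a + b)) * powerProfile b a (σ / D) := by
          rw [Real.mul_rpow hD.le (by positivity), Real.mul_rpow hD.le (by positivity), neg_add,
            Real.rpow_add hD, powerProfile]
          ring
      _ ≤ _ := le_add_of_nonneg_left (by positivity)

variable {E : Type*} [NormedAddCommGroup E]

/-- The model integrand of two interacting bubbles: singularities of order `a` at `Y` and `b` at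
`Z`, where the one at `Y` is weakened by the bound `1 ∧ (|x - Y| / r)^β` on the oscillation of the
coefficient at scale `r`. -/
noncomputable def interactionWeight (β a b r : ℝ) (Y Z x : E) : ℝ :=
  min 1 ((‖x - Y‖ / r) ^ β) * ‖x - Y‖ ^ (-a) * ‖x - Z‖ ^ (-b)

theorem interactionWeight_nonneg (β a b : ℝ) {r : ℝ} (hr : 0 ≤ r) (Y Z x : E) :
    0 ≤ interactionWeight β a b r Y Z x := by
  unfold interactionWeight
  positivity

theorem interactionWeight_le {a b r : ℝ} (β : ℝ) (ha : 0 ≤ a) (hb : 0 ≤ b) (hr : 0 < r) {Y Z : E}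
    (hYZ : Z ≠ Y) (x : E) :
    interactionWeight β a b r Y Z x ≤
      2 ^ b * (r ^ (-a) * ‖Z - Y‖ ^ (-b)) * powerProfile (a - β) β (‖x - Y‖ / r) +
        3 ^ a * ‖Z - Y‖ ^ (-(a + b)) * powerProfile b a (‖x - Z‖ / ‖Z - Y‖) := by
  refine min_one_rpow_mul_rpow_mul_rpow_le ha hb hr (norm_sub_pos_iff.mpr hYZ) (norm_nonneg _)
    (norm_nonneg _) ?_ ?_
  · rw [add_comm, norm_sub_rev x Z]
    exact norm_sub_le_norm_sub_add_norm_sub Z x Y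
  · rw [norm_sub_rev Z Y]
    exact norm_sub_le_norm_sub_add_norm_sub x Y Z

variable [NormedSpace ℝ E] [FiniteDimensional ℝ E] [MeasurableSpace E] [BorelSpace E]

theorem integrable_interactionWeight_and_integral_le [Nontrivial E] (μ : Measure E)
    [μ.IsAddHaarMeasure] {a b β r : ℝ} (hb : 0 ≤ b) (hbE : b < finrank ℝ E) (hEa : finrank ℝ E < a)
    (haβ : a - β < finrank ℝ E) (hr : 0 < r) {Y Z : E} (hYZ : Z ≠ Y) :
    Integrable (interactionWeight β a b r Y Z) μ ∧
      ∫ x, interactionWeight β a b r Y Z x ∂μ ≤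
        2 ^ b * (r ^ (-a) * ‖Z - Y‖ ^ (-b)) *
            (r ^ finrank ℝ E * ∫ x : E, powerProfile (a - β) β ‖x‖ ∂μ) +
          3 ^ a * ‖Z - Y‖ ^ (-(a + b)) *
            (‖Z - Y‖ ^ finrank ℝ E * ∫ x : E, powerProfile b a ‖x‖ ∂μ) := by
  have hD : 0 < ‖Z - Y‖ := norm_sub_pos_iff.mpr hYZ
  have ha : 0 < a := hb.trans_lt (hbE.trans hEa)
  have integrable₁ : Integrable (fun x : E => powerProfile (a - β) β ‖x‖) μ :=
    integrable_powerProfile_norm μ haβ (by linarith)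
  have integrable₂ : Integrable (fun x : E => powerProfile b a ‖x‖) μ :=
    integrable_powerProfile_norm μ hbE (by linarith)
  have scaled₁ := (integrable_comp_norm_sub_div integrable₁ hr Y).const_mul
    (2 ^ b * (r ^ (-a) * ‖Z - Y‖ ^ (-b)))
  have scaled₂ := (integrable_comp_norm_sub_div integrable₂ hD Z).const_mul
    (3 ^ a * ‖Z - Y‖ ^ (-(a + b)))
  have hbound := interactionWeight_le β ha.le hb hr hYZ
  have hweight : Integrable (interactionWeight β a b r Y Z) μ := by
    refine (scaled₁.add scaled₂).mono' ?_ (.of_forall fun x => ?_)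
    · unfold interactionWeight
      fun_prop
    · rw [Real.norm_of_nonneg (interactionWeight_nonneg _ _ _ hr.le _ _ _)]
      exact hbound x
  refine ⟨hweight, (integral_mono hweight (scaled₁.add scaled₂) hbound).trans_eq ?_⟩
  rw [integral_add' scaled₁ scaled₂, integral_const_mul, integral_const_mul,
    integral_comp_norm_sub_div μ _ hr, integral_comp_norm_sub_div μ _ hD]

theorem exists_integral_interactionWeight_le (μ : Measure E) [μ.IsAddHaarMeasure] {n : ℕ}
    (hE : finrank ℝ E = n) {b β τ : ℝ} (hb : 0 ≤ b) (hbn : b < n) (hτ : 0 < τ) (hτβ : τ < β) :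
    ∃ C > 0, ∀ r > 0, ∀ Y Z : E, r ≤ ‖Z - Y‖ →
      Integrable (interactionWeight β (n + τ) b r Y Z) μ ∧
      ∫ x, interactionWeight β (n + τ) b r Y Z x ∂μ ≤ C * r ^ (-τ) * ‖Z - Y‖ ^ (-b) := by
  subst hE
  set n := finrank ℝ E
  have : Nontrivial E :=
    nontrivial_of_finrank_pos (R := ℝ) (by exact_mod_cast hb.trans_lt hbn)
  set J₁ := ∫ x : E, powerProfile (n + τ - β) β ‖x‖ ∂μ
  set J₂ := ∫ x : E, powerProfile b (n + τ) ‖x‖ ∂μ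
  have hJ₁ : 0 ≤ J₁ := integral_nonneg fun x => powerProfile_nonneg _ _ (norm_nonneg x)
  have hJ₂ : 0 ≤ J₂ := integral_nonneg fun x => powerProfile_nonneg _ _ (norm_nonneg x)
  refine ⟨2 ^ b * J₁ + 3 ^ (n + τ) * J₂ + 1, by positivity, fun r hr Y Z hrD => ?_⟩
  have hD : 0 < ‖Z - Y‖ := hr.trans_le hrD
  obtain ⟨hweight, hintegral⟩ := integrable_interactionWeight_and_integral_le μ (β := β) hb hbn
    (lt_add_of_pos_right _ hτ) (by linarith) hr (norm_sub_pos_iff.mp hD)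
  have rpow_mul_pow {y : ℝ} (hy : 0 < y) (c : ℝ) : y ^ (-(n + c)) * y ^ n = y ^ (-c) := by
    rw [← Real.rpow_natCast, ← Real.rpow_add hy]
    ring_nf
  refine ⟨hweight, hintegral.trans ?_⟩
  set D := ‖Z - Y‖
  calc 2 ^ b * (r ^ (-(n + τ)) * D ^ (-b)) * (r ^ n * J₁) +
          3 ^ (n + τ) * D ^ (-(n + τ + b)) * (D ^ n * J₂)
      = 2 ^ b * J₁ * (r ^ (-τ) * D ^ (-b)) + 3 ^ (n + τ) * J₂ * (D ^ (-τ) * D ^ (-b)) := by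
        rw [← rpow_mul_pow hr τ, ← Real.rpow_add hD, ← neg_add, ← rpow_mul_pow hD (τ + b)]
        ring_nf
    _ ≤ 2 ^ b * J₁ * (r ^ (-τ) * D ^ (-b)) + 3 ^ (n + τ) * J₂ * (r ^ (-τ) * D ^ (-b)) := by
        grw [Real.rpow_le_rpow_of_nonpos hr hrD (neg_nonpos.mpr hτ.le)]
    _ ≤ (2 ^ b * J₁ + 3 ^ (n + τ) * J₂ + 1) * r ^ (-τ) * D ^ (-b) := by
        have : 0 ≤ r ^ (-τ) * D ^ (-b) := by positivity
        linarith

end InteractionWeight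

section Bubble

variable {E : Type*} [NormedAddCommGroup E]

/-- The standard bubble `U_{ξ,Λ}` with centre `ξ`, concentration `Λ` and decay exponent `b`, which
is `n - 2s` in the critical equation for the fractional Laplacian of order `s`. -/
noncomputable def bubble (C₀ b Λ : ℝ) (ξ x : E) : ℝ :=
  C₀ * (Λ / (1 + Λ ^ 2 * ‖x - ξ‖ ^ 2)) ^ (b / 2)

theorem bubble_nonneg {C₀ Λ : ℝ} (hC₀ : 0 ≤ C₀) (b : ℝ) (hΛ : 0 ≤ Λ) (ξ x : E) :
    0 ≤ bubble C₀ b Λ ξ x := by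
  unfold bubble
  positivity

theorem continuous_bubble (C₀ : ℝ) {b Λ : ℝ} (hb : 0 ≤ b) (ξ : E) :
    Continuous (bubble C₀ b Λ ξ) := by
  have hden (x : E) : 1 + Λ ^ 2 * ‖x - ξ‖ ^ 2 ≠ 0 := by positivity
  unfold bubble
  fun_prop (disch := first | assumption | positivity)

theorem div_one_add_sq_mul_sq_le {C₁ C₂ Λ r δ ρ : ℝ} (hC₁ : 0 < C₁) (hΛ : Λ ∈ Icc C₁ C₂)
    (hρ : 0 < ρ) (hρr : ρ ≤ r + δ) :
    Λ / (1 + Λ ^ 2 * r ^ 2) ≤ (2 / C₁ + 2 * δ ^ 2 * C₂) * (ρ ^ 2)⁻¹ := by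
  have hΛ0 : 0 < Λ := hC₁.trans_le hΛ.1
  have hρ_sq : ρ ^ 2 ≤ 2 * (r ^ 2 + δ ^ 2) := (by gcongr : ρ ^ 2 ≤ (r + δ) ^ 2).trans add_sq_le
  have hΛr : Λ * r ^ 2 / (1 + Λ ^ 2 * r ^ 2) ≤ 1 / C₁ := by
    rw [div_le_div_iff₀ (by positivity) hC₁]
    nlinarith [mul_le_mul_of_nonneg_left hΛ.1 (by positivity : 0 ≤ Λ * r ^ 2)]
  have hΛδ : Λ / (1 + Λ ^ 2 * r ^ 2) ≤ C₂ :=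
    (div_le_self hΛ0.le (by nlinarith [sq_nonneg (Λ * r)])).trans hΛ.2
  rw [← div_eq_mul_inv, le_div_iff₀ (by positivity)]
  calc Λ / (1 + Λ ^ 2 * r ^ 2) * ρ ^ 2 ≤ Λ / (1 + Λ ^ 2 * r ^ 2) * (2 * (r ^ 2 + δ ^ 2)) := by
        gcongr
    _ = 2 * (Λ * r ^ 2 / (1 + Λ ^ 2 * r ^ 2)) + 2 * δ ^ 2 * (Λ / (1 + Λ ^ 2 * r ^ 2)) := by ring
    _ ≤ 2 * (1 / C₁) + 2 * δ ^ 2 * C₂ := by gcongr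
    _ = 2 / C₁ + 2 * δ ^ 2 * C₂ := by ring

theorem bubble_le_mul_rpow_neg {C₀ C₁ C₂ b Λ δ : ℝ} (hC₀ : 0 ≤ C₀) (hC₁ : 0 < C₁) (hb : 0 ≤ b)
    (hΛ : Λ ∈ Icc C₁ C₂) {ξ Y x : E} (hξ : ‖ξ - Y‖ ≤ δ) (hx : x ≠ Y) :
    bubble C₀ b Λ ξ x ≤ C₀ * (2 / C₁ + 2 * δ ^ 2 * C₂) ^ (b / 2) * ‖x - Y‖ ^ (-b) := by
  have hΛ0 : 0 < Λ := hC₁.trans_le hΛ.1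
  have hC₂ : 0 < C₂ := hΛ0.trans_le hΛ.2
  have hρ : 0 < ‖x - Y‖ := norm_sub_pos_iff.mpr hx
  have hρr : ‖x - Y‖ ≤ ‖x - ξ‖ + δ := by grw [norm_sub_le_norm_sub_add_norm_sub x ξ Y, hξ]
  have rpow_half : ((‖x - Y‖ ^ 2)⁻¹) ^ (b / 2) = ‖x - Y‖ ^ (-b) := by
    rw [Real.inv_rpow (by positivity), ← Real.rpow_natCast, ← Real.rpow_mul hρ.le,
      Real.rpow_neg hρ.le]
    ring_nf
  rw [bubble, ← rpow_half, mul_assoc, ← Real.mul_rpow (by positivity) (by positivity)]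
  gcongr
  exact div_one_add_sq_mul_sq_le hC₁ hΛ hρ hρr

theorem hasDerivAt_bubble (C₀ b : ℝ) {Λ : ℝ} (hΛ : 0 < Λ) (ξ x : E) :
    HasDerivAt (fun t => bubble C₀ b t ξ x)
      (b / (2 * Λ) * ((1 - Λ ^ 2 * ‖x - ξ‖ ^ 2) / (1 + Λ ^ 2 * ‖x - ξ‖ ^ 2)) * bubble C₀ b Λ ξ x)
      Λ := by
  have hden : 0 < 1 + Λ ^ 2 * ‖x - ξ‖ ^ 2 := by positivity
  have hquot := (hasDerivAt_id Λ).div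
    ((((hasDerivAt_id Λ).pow 2).mul_const (‖x - ξ‖ ^ 2)).const_add 1) hden.ne'
  have hquot_ne : Λ / (1 + Λ ^ 2 * ‖x - ξ‖ ^ 2) ≠ 0 := by positivity
  refine ((hquot.rpow_const (p := b / 2) (.inl hquot_ne)).const_mul C₀).congr_deriv ?_
  simp only [id_eq, Pi.pow_apply, Pi.div_apply]
  rw [Real.rpow_sub_one hquot_ne, bubble]
  field_simp
  ring

theorem abs_deriv_bubble_le {C₀ b Λ : ℝ} (hC₀ : 0 ≤ C₀) (hb : 0 ≤ b) (hΛ : 0 < Λ) (ξ x : E) :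
    |deriv (fun t => bubble C₀ b t ξ x) Λ| ≤ b / (2 * Λ) * bubble C₀ b Λ ξ x := by
  have hden : 0 < 1 + Λ ^ 2 * ‖x - ξ‖ ^ 2 := by positivity
  have hfrac : |(1 - Λ ^ 2 * ‖x - ξ‖ ^ 2) / (1 + Λ ^ 2 * ‖x - ξ‖ ^ 2)| ≤ 1 := by
    rw [abs_div, abs_of_pos hden, div_le_one hden, abs_le]
    constructor <;> linarith [show 0 ≤ Λ ^ 2 * ‖x - ξ‖ ^ 2 by positivity]
  have hbubble := bubble_nonneg hC₀ b hΛ.le ξ x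
  rw [(hasDerivAt_bubble C₀ b hΛ ξ x).deriv, abs_mul, abs_mul, abs_of_nonneg hbubble,
    abs_of_nonneg (by positivity : 0 ≤ b / (2 * Λ))]
  exact mul_le_mul_of_nonneg_right (mul_le_of_le_one_right (by positivity) hfrac) hbubble

theorem abs_mul_bubble_rpow_mul_deriv_bubble_le {A C₀ C₁ M Λ a b c r β κ : ℝ} {x Y Z ξ η : E}
    (ha : 0 ≤ a) (hb : 0 < b) (hC₀ : 0 ≤ C₀) (hC₁ : 0 < C₁) (hM : 0 ≤ M) (hΛ : C₁ ≤ Λ)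
    (hc : 0 ≤ c) (hκ : |κ| ≤ A * min 1 ((‖x - Y‖ / r) ^ β))
    (hY : bubble C₀ b M ξ x ≤ c * ‖x - Y‖ ^ (-b)) (hZ : bubble C₀ b Λ η x ≤ c * ‖x - Z‖ ^ (-b)) :
    |κ * bubble C₀ b M ξ x ^ (a / b) * deriv (fun t => bubble C₀ b t η x) Λ| ≤
      A * c ^ (a / b) * (b / (2 * C₁) * c) * interactionWeight β a b r Y Z x := by
  have hU := bubble_nonneg hC₀ b hM ξ x
  have hpow : bubble C₀ b M ξ x ^ (a / b) ≤ c ^ (a / b) * ‖x - Y‖ ^ (-a) := by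
    calc bubble C₀ b M ξ x ^ (a / b) ≤ (c * ‖x - Y‖ ^ (-b)) ^ (a / b) := by gcongr
      _ = c ^ (a / b) * ‖x - Y‖ ^ (-a) := by
        rw [Real.mul_rpow hc (by positivity), ← Real.rpow_mul (norm_nonneg _), neg_mul,
          mul_div_cancel₀ _ hb.ne']
  have hderiv : |deriv (fun t => bubble C₀ b t η x) Λ| ≤
      b / (2 * C₁) * (c * ‖x - Z‖ ^ (-b)) := by
    have hΛ0 : 0 < Λ := hC₁.trans_le hΛ
    have hUη := bubble_nonneg hC₀ b hΛ0.le η x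
    refine (abs_deriv_bubble_le hC₀ hb.le hΛ0 η x).trans ?_
    gcongr
  calc |κ * bubble C₀ b M ξ x ^ (a / b) * deriv (fun t => bubble C₀ b t η x) Λ|
      = |κ| * bubble C₀ b M ξ x ^ (a / b) * |deriv (fun t => bubble C₀ b t η x) Λ| := by
        rw [abs_mul, abs_mul, abs_of_nonneg (Real.rpow_nonneg hU _)]
    _ ≤ A * min 1 ((‖x - Y‖ / r) ^ β) * (c ^ (a / b) * ‖x - Y‖ ^ (-a)) *
          (b / (2 * C₁) * (c * ‖x - Z‖ ^ (-b))) := by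
        have := (abs_nonneg κ).trans hκ
        gcongr
    _ = A * c ^ (a / b) * (b / (2 * C₁) * c) * interactionWeight β a b r Y Z x := by
        rw [interactionWeight]
        ring

theorem continuous_deriv_bubble (C₀ : ℝ) {b Λ : ℝ} (hb : 0 ≤ b) (hΛ : 0 < Λ) (ξ : E) :
    Continuous (fun x => deriv (fun t => bubble C₀ b t ξ x) Λ) := by
  simp only [(hasDerivAt_bubble C₀ b hΛ ξ _).deriv]
  have hden (x : E) : 1 + Λ ^ 2 * ‖x - ξ‖ ^ 2 ≠ 0 := by positivity
  have := continuous_bubble C₀ (Λ := Λ) hb ξ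
  fun_prop (disch := assumption)

theorem measurable_mul_bubble_rpow_mul_deriv_bubble [MeasurableSpace E] [BorelSpace E] {f : E → ℝ}
    (hf : Measurable f) (C₀ p : ℝ) {b Λ : ℝ} (M : ℝ) (hb : 0 ≤ b) (hΛ : 0 < Λ) (ξ η : E) :
    Measurable fun x =>
      f x * bubble C₀ b M ξ x ^ p * deriv (fun t => bubble C₀ b t η x) Λ :=
  (hf.mul ((continuous_bubble C₀ hb ξ).measurable.pow_const p)).mul
    (continuous_deriv_bubble C₀ hb hΛ η).measurable

end Bubble

section Coefficient

theorem exists_abs_le_mul_min_one_rpow {E : Type*} [SeminormedAddCommGroup E] {f : E → ℝ} {β : ℝ}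
    (hβ : 0 ≤ β) (hbdd : ∃ B, ∀ x, |f x| ≤ B) (hf : f =O[𝓝 0] fun x => ‖x‖ ^ β) :
    ∃ A > 0, ∀ x, |f x| ≤ A * min 1 (‖x‖ ^ β) := by
  obtain ⟨B, hB⟩ := hbdd
  have hB0 : 0 ≤ B := (abs_nonneg _).trans (hB 0)
  obtain ⟨c, hc, hfc⟩ := hf.exists_pos
  obtain ⟨δ, hδ, hball⟩ := Metric.eventually_nhds_iff.mp hfc.bound
  have hδβ : 0 < δ ^ (-β) := Real.rpow_pos_of_pos hδ _
  refine ⟨B + c + B * δ ^ (-β), by positivity, fun x => ?_⟩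
  have hxβ : 0 ≤ ‖x‖ ^ β := by positivity
  rw [mul_min_of_nonneg _ _ (by positivity), le_min_iff]
  refine ⟨by linarith [hB x, mul_nonneg hB0 hδβ.le], ?_⟩
  rcases lt_or_ge ‖x‖ δ with near | far
  · calc |f x| ≤ c * ‖x‖ ^ β := by
          simpa [Real.abs_rpow_of_nonneg (norm_nonneg x)] using hball (y := x) (by simpa using near)
      _ ≤ (B + c + B * δ ^ (-β)) * ‖x‖ ^ β := by
          gcongr
          linarith [mul_nonneg hB0 hδβ.le]
  · calc |f x| ≤ B * (δ ^ (-β) * δ ^ β) := by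
          rw [← Real.rpow_add hδ, neg_add_cancel, Real.rpow_zero, mul_one]
          exact hB x
      _ ≤ B * (δ ^ (-β) * ‖x‖ ^ β) := by gcongr
      _ ≤ (B + c + B * δ ^ (-β)) * ‖x‖ ^ β := by
          linarith [mul_nonneg hB0 hxβ, mul_nonneg hc.le hxβ]

variable {n k : ℕ} {β : ℝ} {a : Fin n → ℝ} {K : EuclideanSpace ℝ (Fin n) → ℝ}

theorem KHyp.exists_abs_sub_one_le (hK : KHyp n k β a K) : ∃ B, ∀ x, |K x - 1| ≤ B := by
  obtain ⟨⟨K₀, K₁, hK₀, hK₀₁⟩, -⟩ := hK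
  refine ⟨K₁ + 1, fun x => abs_le.mpr ⟨?_, ?_⟩⟩ <;> linarith [hK₀₁ x]

theorem isBigO_sum_mul_abs_rpow {ι : Type*} [Fintype ι] (a : ι → ℝ) (hβ : 0 ≤ β)
    (l : Filter (EuclideanSpace ℝ ι)) :
    (fun x : EuclideanSpace ℝ ι => ∑ i, a i * |x i| ^ β) =O[l] fun x => ‖x‖ ^ β := by
  refine IsBigO.fun_sum fun i _ => .const_mul_left (.of_norm_le fun x => ?_) _
  rw [Real.norm_of_nonneg (by positivity)]
  gcongr
  exact PiLp.norm_apply_le x i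

theorem isBigO_rpow_of_tendsto_sum_norm_iteratedFDeriv {E : Type*} [NormedAddCommGroup E]
    [NormedSpace ℝ E] {R : E → ℝ} {N : ℕ}
    (hR : Tendsto (fun y => ∑ j ∈ Finset.range (N + 1), ‖iteratedFDeriv ℝ j R y‖ *
      ‖y‖ ^ (-β + (j : ℝ))) (𝓝[≠] 0) (𝓝 0)) :
    R =O[𝓝[≠] 0] fun y => ‖y‖ ^ β := by
  refine .of_bound 1 ?_
  filter_upwards [hR.eventually (ge_mem_nhds one_pos), self_mem_nhdsWithin] with y hy hy0
  have hyβ : 0 < ‖y‖ ^ β := Real.rpow_pos_of_pos (norm_pos_iff.mpr hy0) β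
  have zeroth_term : ‖R y‖ * ‖y‖ ^ (-β) ≤ 1 := by
    simpa using (Finset.single_le_sum (fun j _ => by positivity)
      (Finset.mem_range.mpr N.succ_pos)).trans hy
  rwa [Real.rpow_neg (norm_nonneg y), ← div_eq_mul_inv, div_le_iff₀ hyβ,
    ← Real.norm_of_nonneg hyβ.le] at zeroth_term

theorem KHyp.isBigO_sub_one (hK : KHyp n k β a K) (hβ : 0 ≤ β) :
    (fun x => K x - 1) =O[𝓝 0] fun x => ‖x‖ ^ β := by
  obtain ⟨-, -, -, -, hK0, -, -, -, R, hexpansion, -, -, hR⟩ := hK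
  rw [← nhdsNE_sup_pure]
  refine IsBigO.sup ?_ (isBigO_pure.mpr fun _ => by simp [hK0])
  refine ((isBigO_sum_mul_abs_rpow a hβ _).add
    (isBigO_rpow_of_tendsto_sum_norm_iteratedFDeriv hR)).congr' ?_ .rfl
  filter_upwards [hexpansion.filter_mono nhdsWithin_le_nhds] with x hx
  rw [hx]
  ring

theorem KHyp.measurable (hK : KHyp n k β a K) : Measurable K :=
  hK.2.1.continuous.measurable

theorem KHyp.periodic_single (hK : KHyp n k β a K) {j : Fin n} (hj : (j : ℕ) < k) :
    Function.Periodic K (EuclideanSpace.single j 1) :=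
  fun x => hK.2.2.2.1 x j hj

end Coefficient

theorem exists_integral_mul_bubble_rpow_mul_deriv_bubble_le {E : Type*} [NormedAddCommGroup E]
    [NormedSpace ℝ E] [FiniteDimensional ℝ E] [MeasurableSpace E] [BorelSpace E] (μ : Measure E)
    [μ.IsAddHaarMeasure] {n : ℕ} (hE : finrank ℝ E = n) {b τ β C₀ C₁ C₂ : ℝ} (δ : ℝ) (hb : 0 < b)
    (hbn : b < n) (hτ : 0 < τ) (hτβ : τ < β) (hC₀ : 0 < C₀) (hC₁ : 0 < C₁) (hC₁₂ : C₁ ≤ C₂)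
    {K : E → ℝ} (hKm : Measurable K) (hKb : ∃ B, ∀ x, |K x - 1| ≤ B)
    (hK0 : (fun x => K x - 1) =O[𝓝 0] fun x => ‖x‖ ^ β) :
    ∃ C > 0, ∀ lam > 0, ∀ Y Z : E, Function.Periodic K (lam⁻¹ • Y) → lam ≤ ‖Z - Y‖ →
      ∀ ξ η : E, ‖ξ - Y‖ ≤ δ → ‖η - Z‖ ≤ δ → ∀ M ∈ Icc C₁ C₂, ∀ Λ ∈ Icc C₁ C₂,
        Integrable (fun x => (K (lam⁻¹ • x) - 1) * bubble C₀ b M ξ x ^ ((n + τ) / b) *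
          deriv (fun t => bubble C₀ b t η x) Λ) μ ∧
        |∫ x, (K (lam⁻¹ • x) - 1) * bubble C₀ b M ξ x ^ ((n + τ) / b) *
          deriv (fun t => bubble C₀ b t η x) Λ ∂μ| ≤ C * lam ^ (-τ) * ‖Z - Y‖ ^ (-b) := by
  have hn : (0 : ℝ) < n := hb.trans hbn
  have hC₂ : 0 < C₂ := hC₁.trans_le hC₁₂
  have : Nontrivial E := nontrivial_of_finrank_pos (R := ℝ) (by rw [hE]; exact_mod_cast hn)
  obtain ⟨A, hA, hKA⟩ := exists_abs_le_mul_min_one_rpow (hτ.trans hτβ).le hKb hK0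
  obtain ⟨C, hC, hweight⟩ := exists_integral_interactionWeight_le μ hE hb.le hbn hτ hτβ
  set c := C₀ * (2 / C₁ + 2 * δ ^ 2 * C₂) ^ (b / 2)
  have hc : 0 < c := by positivity
  set B := A * c ^ ((n + τ) / b) * (b / (2 * C₁) * c)
  refine ⟨B * C, by positivity, fun lam hlam Y Z hper hYZ ξ η hξ hη M hM Λ hΛ => ?_⟩
  have hM0 : 0 < M := hC₁.trans_le hM.1
  have hΛ0 : 0 < Λ := hC₁.trans_le hΛ.1
  set F : E → ℝ := fun x => (K (lam⁻¹ • x) - 1) * bubble C₀ b M ξ x ^ ((n + τ) / b) *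
    deriv (fun t => bubble C₀ b t η x) Λ
  obtain ⟨hintegrable, hintegral⟩ := hweight lam hlam Y Z hYZ
  have hK_near (x : E) : |K (lam⁻¹ • x) - 1| ≤ A * min 1 ((‖x - Y‖ / lam) ^ β) := by
    have := hKA (lam⁻¹ • x - lam⁻¹ • Y)
    rwa [hper.sub_eq, ← smul_sub, norm_smul, norm_inv, Real.norm_of_nonneg hlam.le,
      inv_mul_eq_div] at this
  have hbound : ∀ᵐ x ∂μ, ‖F x‖ ≤ B * interactionWeight β (n + τ) b lam Y Z x := by
    filter_upwards [Measure.ae_ne μ Y, Measure.ae_ne μ Z] with x hxY hxZ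
    exact abs_mul_bubble_rpow_mul_deriv_bubble_le (by positivity) hb hC₀.le hC₁ hM0.le hΛ.1 hc.le
      (hK_near x) (bubble_le_mul_rpow_neg hC₀.le hC₁ hb.le hM hξ hxY)
      (bubble_le_mul_rpow_neg hC₀.le hC₁ hb.le hΛ hη hxZ)
  have hmeas : Measurable F := measurable_mul_bubble_rpow_mul_deriv_bubble
    ((hKm.comp (measurable_const_smul lam⁻¹)).sub_const 1) C₀ _ M hb.le hΛ0 ξ η
  refine ⟨(hintegrable.const_mul B).mono' hmeas.aestronglyMeasurable hbound, ?_⟩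
  calc |∫ x, F x ∂μ| ≤ ∫ x, B * interactionWeight β (n + τ) b lam Y Z x ∂μ :=
        norm_integral_le_of_norm_le (hintegrable.const_mul B) hbound
    _ ≤ B * (C * lam ^ (-τ) * ‖Z - Y‖ ^ (-b)) := by
        rw [integral_const_mul]
        gcongr
    _ = B * C * lam ^ (-τ) * ‖Z - Y‖ ^ (-b) := by ring

section Lattice

theorem abs_le_norm_sub_of_forall_eq_mul_intCast {ι : Type*} [Fintype ι] {d : ℝ}
    {x y : EuclideanSpace ℝ ι} {p q : ι → ℤ} (hx : ∀ j, x j = d * p j) (hy : ∀ j, y j = d * q j)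
    (hxy : x ≠ y) : |d| ≤ ‖x - y‖ := by
  obtain ⟨j, hj⟩ : ∃ j, x j ≠ y j := by
    contrapose! hxy
    exact PiLp.ext hxy
  have hpq : p j - q j ≠ 0 := fun h => hj (by rw [hx, hy, sub_eq_zero.mp h])
  calc |d| ≤ |d| * |((p j - q j : ℤ) : ℝ)| :=
        le_mul_of_one_le_right (abs_nonneg d) (by exact_mod_cast Int.one_le_abs hpq)
    _ = ‖(x - y) j‖ := by
        rw [PiLp.sub_apply, hx, hy, ← mul_sub, norm_mul, Real.norm_eq_abs, Real.norm_eq_abs]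
        push_cast
        rfl
    _ ≤ ‖x - y‖ := PiLp.norm_apply_le _ j

theorem periodic_of_forall_eq_intCast {ι : Type*} [Finite ι] [DecidableEq ι] {α : Type*}
    {f : EuclideanSpace ℝ ι → α} {Y : EuclideanSpace ℝ ι} {q : ι → ℤ} (hY : ∀ j, Y j = q j)
    (hf : ∀ j, q j ≠ 0 → Function.Periodic f (EuclideanSpace.single j 1)) :
    Function.Periodic f Y := by
  have := Fintype.ofFinite ι
  have hsum : Y = ∑ j, q j • EuclideanSpace.single j (1 : ℝ) := by
    ext i
    simp [hY, Pi.single_apply]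
  rw [hsum]
  refine Finset.sum_induction _ (Function.Periodic f) (fun _ _ => .add_period)
    (Function.periodic_with_period_zero f) fun j _ => ?_
  by_cases hj : q j = 0
  · simp [hj]
  · exact (hf j hj).zsmul (q j)

variable {n k m : ℕ} {d : ℝ} {X : Fin ((m + 1) ^ k) → EuclideanSpace ℝ (Fin n)}

theorem latticeEnum.abs_le_norm_sub (hX : latticeEnum n k m d X) {i h : Fin ((m + 1) ^ k)}
    (hih : i ≠ h) : |d| ≤ ‖X i - X h‖ := by
  obtain ⟨p, -, -, hp⟩ := hX.2.1 i
  obtain ⟨q, -, -, hq⟩ := hX.2.1 h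
  exact abs_le_norm_sub_of_forall_eq_mul_intCast hp hq (hX.1.ne hih)

theorem latticeEnum.periodic_inv_smul {lam : ℝ} {l : ℕ} (hlam : lam ≠ 0)
    (hX : latticeEnum n k m (lam * l) X) {α : Type*} {f : EuclideanSpace ℝ (Fin n) → α}
    (hf : ∀ j : Fin n, (j : ℕ) < k → Function.Periodic f (EuclideanSpace.single j 1))
    (i : Fin ((m + 1) ^ k)) : Function.Periodic f (lam⁻¹ • X i) := by
  obtain ⟨q, -, hq0, hq⟩ := hX.2.1 i
  refine periodic_of_forall_eq_intCast (q := fun j => l * q j) (fun j => ?_) fun j hj => hf j ?_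
  · rw [PiLp.smul_apply, hq, smul_eq_mul, mul_assoc, inv_mul_cancel_left₀ hlam]
    push_cast
    rfl
  · contrapose! hj
    simp [hq0 j hj]

end Lattice

theorem stmt_17_general {n k : ℕ} {s β C₀ C₁ C₂ : ℝ} (δ : ℝ) (hs : 0 < s) (hsn : 2 * s < n)
    (hsβ : 2 * s < β) (hC₀ : 0 < C₀) (hC₁ : 0 < C₁) (hC₁₂ : C₁ ≤ C₂)
    {K : EuclideanSpace ℝ (Fin n) → ℝ} (hKm : Measurable K) (hKb : ∃ B, ∀ x, |K x - 1| ≤ B)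
    (hK0 : (fun x => K x - 1) =O[𝓝 0] fun x => ‖x‖ ^ β)
    (hK : ∀ j : Fin n, (j : ℕ) < k → Function.Periodic K (EuclideanSpace.single j 1)) :
    ∃ C > 0, ∀ l : ℕ, 1 ≤ l → ∀ m : ℕ, ∀ lam > 0,
      ∀ X : Fin ((m + 1) ^ k) → EuclideanSpace ℝ (Fin n), latticeEnum n k m (lam * l) X →
      ∀ i h, h ≠ i → ∀ ξ η, ‖ξ - X h‖ ≤ δ → ‖η - X i‖ ≤ δ → ∀ M ∈ Icc C₁ C₂, ∀ Λ ∈ Icc C₁ C₂,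
        Integrable (fun x => (K (lam⁻¹ • x) - 1) *
          bubble C₀ (n - 2 * s) M ξ x ^ ((n + 2 * s) / (n - 2 * s)) *
          deriv (fun t => bubble C₀ (n - 2 * s) t η x) Λ) ∧
        |∫ x, (K (lam⁻¹ • x) - 1) *
          bubble C₀ (n - 2 * s) M ξ x ^ ((n + 2 * s) / (n - 2 * s)) *
          deriv (fun t => bubble C₀ (n - 2 * s) t η x) Λ| ≤
            C * lam ^ (-(2 * s)) * ‖X i - X h‖ ^ (-(n - 2 * s)) := by
  obtain ⟨C, hC, hbound⟩ := exists_integral_mul_bubble_rpow_mul_deriv_bubble_le volume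
    finrank_euclideanSpace_fin δ (sub_pos.mpr hsn) (by linarith) (by linarith : 0 < 2 * s) hsβ
    hC₀ hC₁ hC₁₂ hKm hKb hK0
  refine ⟨C, hC, fun l hl m lam hlam X hX i h hih => ?_⟩
  refine hbound lam hlam (X h) (X i) (hX.periodic_inv_smul hlam.ne' hK h) ?_
  calc lam ≤ lam * l := le_mul_of_one_le_right hlam.le (by exact_mod_cast hl)
    _ ≤ |lam * l| := le_abs_self _
    _ ≤ ‖X i - X h‖ := hX.abs_le_norm_sub hih.symm

theorem stmt_17 (n k : ℕ) (s β C₀ C₁ C₂ : ℝ) (hn0 : 0 < n) (hs0 : 0 < s) (hs1 : s < 1)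
    (hn : 2 * s + 2 < (n : ℝ)) (hn4s : 4 * s < (n : ℝ)) (hβ4s : (n : ℝ) + 2 * s - β < 4 * s)
    (hk1 : 1 ≤ k) (hk2 : (k : ℝ) < ((n : ℝ) - 2 * s) / 2)
    (hβ1 : (n : ℝ) - 2 * s < β) (hβ2 : β < (n : ℝ))
    (hC₀ : 0 < C₀) (hC₁ : 0 < C₁) (hC₁₂ : C₁ < C₂)
    (a : Fin n → ℝ) (K : EuclideanSpace ℝ (Fin n) → ℝ) (hK : KHyp n k β a K) :
    ∃ C > (0 : ℝ), ∃ l₀ : ℕ, ∀ l : ℕ, l₀ ≤ l → ∀ m : ℕ, 1 ≤ m →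
      ∀ lam : ℝ, lam = (l : ℝ) ^ (((n : ℝ) - 2 * s) / (β - (n : ℝ) + 2 * s)) →
      ∀ X : Fin ((m + 1) ^ k) → EuclideanSpace ℝ (Fin n), latticeEnum n k m (lam * l) X →
      ∀ P : Fin ((m + 1) ^ k) → EuclideanSpace ℝ (Fin n), (∀ i, ‖P i - X i‖ < 1 / 2) →
      ∀ Λ : Fin ((m + 1) ^ k) → ℝ, (∀ i, Λ i ∈ Set.Icc C₁ C₂) →
      ∀ i h : Fin ((m + 1) ^ k), h ≠ i →
        |∫ x : EuclideanSpace ℝ (Fin n),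
            (K (lam⁻¹ • x) - 1) *
              (C₀ * (Λ h / (1 + Λ h ^ 2 * ‖x - P h‖ ^ 2)) ^ (((n : ℝ) - 2 * s) / 2)) ^
                (((n : ℝ) + 2 * s) / ((n : ℝ) - 2 * s)) *
              deriv (fun b : ℝ =>
                C₀ * (b / (1 + b ^ 2 * ‖x - P i‖ ^ 2)) ^ (((n : ℝ) - 2 * s) / 2)) (Λ i)| ≤
          C * lam ^ (-(2 * s)) * ‖X i - X h‖ ^ (-((n : ℝ) - 2 * s)) := by
  obtain ⟨C, hC, hbound⟩ := stmt_17_general (1 / 2) hs0 (by linarith) (by linarith) hC₀ hC₁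
    hC₁₂.le hK.measurable hK.exists_abs_sub_one_le (hK.isBigO_sub_one (by linarith))
    fun _ => hK.periodic_single
  refine ⟨C, hC, 1, fun l hl m _ lam hlam X hX P hP Λ hΛ i h hih => ?_⟩
  have hlam0 : 0 < lam := hlam ▸ Real.rpow_pos_of_pos (by exact_mod_cast hl) _
  exact (hbound l hl m lam hlam0 X hX i h hih (P h) (P i) (hP h).le (hP i).le
    (Λ h) (hΛ h) (Λ i) (hΛ i)).2
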